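/- arXiv:2602.07599 — 2 statements merged into one kernel-verified Lean document; each statement's English description precedes it below -/
import Mathlib

section
/- Let d be even, let θ : Fin (d/2) → ℝ be a family of frequencies, and let R ∈ ℝ^{d×d} be the block-diagonal matrix whose i-th 2×2 diagonal block is the rotation matrix R_{θ_i} = [[cos θ_i, −sin θ_i],[sin θ_i, cos θ_i]]. Let α ∈ ℝ^d be the vector with α_{2i−1} = 1 and α_{2i} = 0 for every block i. Then for every t ∈ ℕ, the vector h_t = R^t α satisfies h_{t,2i−1} = cos(t·θ_i) and h_{t,2i} = sin(t·θ_i) for every i. Consequently the standard sinusoidal positional encodings are exactly the state sequence of a weighted finite automaton whose transition matrix is the input-independent matrix R. -/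
open Matrix Real

/-! The `i`-th block of `R` is multiplication by `exp (θ i * I)` on `ℂ ≃ ℝ²`, so the `i`-th block of
`R ^ t` is multiplication by `exp (t * θ i * I)`, and `α` selects the first column of that block,
which is `(cos (t * θ i), sin (t * θ i))`. -/

section Blocks

variable {m o S : Type*} [Fintype m] [Fintype o] [DecidableEq o]

theorem blockDiagonal_mulVec_apply {l : Type*} [NonUnitalNonAssocSemiring S]
    (M : o → Matrix l m S) (v : m × o → S) (a : l) (i : o) :
    (blockDiagonal M *ᵥ v) (a, i) = (M i *ᵥ fun b => v (b, i)) a := by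
  simp only [mulVec, dotProduct, Fintype.sum_prod_type, blockDiagonal_apply, ite_mul, zero_mul,
    Finset.sum_ite_eq, Finset.mem_univ, if_true]

variable [DecidableEq m] [Semiring S]

theorem pow_mulVec_apply_of_block {R : Matrix (o × m) (o × m) S} {M : o → Matrix m m S}
    (hR : ∀ i j a b, R (i, a) (j, b) = if i = j then M i a b else 0)
    (t : ℕ) (v : o × m → S) (i : o) (a : m) :
    (R ^ t *ᵥ v) (i, a) = (M i ^ t *ᵥ fun b => v (i, b)) a := by
  let swap := reindexAlgEquiv ℕ S (Equiv.prodComm m o)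
  have hR_swap : R = swap (blockDiagonal M) := by
    ext ⟨i, a⟩ ⟨j, b⟩
    exact hR i j a b
  have hpow : R ^ t = swap (blockDiagonal (M ^ t)) := by
    rw [hR_swap, ← map_pow, blockDiagonal_pow]
  rw [hpow, coe_reindexAlgEquiv, reindex_apply, submatrix_mulVec_equiv]
  simp only [Function.comp_apply, Equiv.prodComm_symm, Equiv.prodComm_apply, Prod.swap_prod_mk,
    blockDiagonal_mulVec_apply, Pi.pow_apply, Function.comp_def]

theorem iterate_mulVec (M : Matrix m m S) (t : ℕ) (v : m → S) :
    (M *ᵥ ·)^[t] v = M ^ t *ᵥ v := by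
  induction t with
  | zero => rw [Function.iterate_zero_apply, pow_zero, one_mulVec]
  | succ t ih => rw [Function.iterate_succ_apply', ih, mulVec_mulVec, pow_succ']

end Blocks

section Rotation

/-- The matrix `R_φ` of the rotation of the plane by the angle `φ`. -/
noncomputable def rotationMatrix (φ : ℝ) : Matrix (Fin 2) (Fin 2) ℝ :=
  !![Real.cos φ, -Real.sin φ; Real.sin φ, Real.cos φ]

theorem leftMulMatrix_exp_ofReal_mul_I (φ : ℝ) :
    Algebra.leftMulMatrix Complex.basisOneI (Complex.exp (φ * Complex.I)) = rotationMatrix φ := by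
  rw [Algebra.leftMulMatrix_complex, Complex.exp_ofReal_mul_I_re, Complex.exp_ofReal_mul_I_im,
    rotationMatrix]

theorem rotationMatrix_pow (φ : ℝ) (t : ℕ) :
    rotationMatrix φ ^ t = rotationMatrix (t * φ) := by
  have hexp : Complex.exp (φ * Complex.I) ^ t = Complex.exp ((t * φ : ℝ) * Complex.I) := by
    rw [← Complex.exp_nat_mul, Complex.ofReal_mul, Complex.ofReal_natCast, mul_assoc]
  rw [← leftMulMatrix_exp_ofReal_mul_I, ← map_pow, hexp, leftMulMatrix_exp_ofReal_mul_I]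

theorem rotationMatrix_mulVec_one_zero (φ : ℝ) :
    rotationMatrix φ *ᵥ ![1, 0] = ![Real.cos φ, Real.sin φ] := by
  ext a
  fin_cases a <;> simp [rotationMatrix]

end Rotation

theorem stmt0_general {ι : Type*} [Fintype ι] [DecidableEq ι] (θ : ι → ℝ)
    (R : Matrix (ι × Fin 2) (ι × Fin 2) ℝ)
    (hR : ∀ (i j : ι) (a b : Fin 2),
      R (i, a) (j, b) = if i = j then rotationMatrix (θ i) a b else 0)
    (α : ι × Fin 2 → ℝ)
    (hα : ∀ i : ι, α (i, 0) = 1 ∧ α (i, 1) = 0) :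
    (∀ (t : ℕ) (i : ι),
        (R ^ t *ᵥ α) (i, 0) = Real.cos (t * θ i) ∧
        (R ^ t *ᵥ α) (i, 1) = Real.sin (t * θ i)) ∧
    (∀ (A : Type*) (x : List A),
        x.foldl (fun v _ => R *ᵥ v) α = R ^ x.length *ᵥ α) := by
  have hα_block (i : ι) : (fun a => α (i, a)) = ![1, 0] :=
    funext <| Fin.forall_fin_two.2 (hα i)
  have hstate (t : ℕ) (i : ι) (a : Fin 2) :
      (R ^ t *ᵥ α) (i, a) = ![Real.cos (t * θ i), Real.sin (t * θ i)] a := by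
    rw [pow_mulVec_apply_of_block hR, hα_block, rotationMatrix_pow, rotationMatrix_mulVec_one_zero]
  refine ⟨fun t i => ⟨hstate t i 0, hstate t i 1⟩, fun A x => ?_⟩
  rw [List.foldl_const, iterate_mulVec]

/-- Sinusoidal/rotary positional encodings are exactly the state sequence of a
WFA with input-independent block-diagonal rotation transition matrix `R`.
We realize the even dimension `d = 2*n` via the index type `Fin n × Fin 2`,
where block `i` consists of coordinates `(i, 0)` (odd position `2i−1`) and `(i, 1)`
(even position `2i`). -/
theorem stmt0 (n : ℕ) (θ : Fin n → ℝ)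
    (R : Matrix (Fin n × Fin 2) (Fin n × Fin 2) ℝ)
    (hR : ∀ (i j : Fin n) (a b : Fin 2),
      R (i, a) (j, b) =
        if i = j then
          (!![Real.cos (θ i), -Real.sin (θ i); Real.sin (θ i), Real.cos (θ i)]) a b
        else 0)
    (α : Fin n × Fin 2 → ℝ)
    (hα : ∀ i : Fin n, α (i, 0) = 1 ∧ α (i, 1) = 0) :
    (∀ (t : ℕ) (i : Fin n),
        ((R ^ t) *ᵥ α) (i, 0) = Real.cos (t * θ i) ∧
        ((R ^ t) *ᵥ α) (i, 1) = Real.sin (t * θ i)) ∧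
    (∀ (A : Type) (x : List A),
        x.foldl (fun v _ => R *ᵥ v) α = (R ^ x.length) *ᵥ α) :=
  stmt0_general θ R hR α hα
end

section
/- Let M : ℝ^{d_in} → ℝ^{d×d} be an encoding of continuous input embeddings into transition matrices such that ‖M(u)‖₂ ≤ γ < 1 for all u and ‖M(u) − M(u')‖₂ ≤ K_M ‖u − u'‖₂ for all u, u' (Lipschitz continuity of the encoding). Let x = (x_1,…,x_T) and x' = (x'_1,…,x'_T) be two input sequences in ℝ^{d_in}, and let h_t = M(x_t) h_{t−1}, h'_t = M(x'_t) h'_{t−1} with common initial state h_0 = h'_0 = α. Let R be a bound with ‖h'_t‖₂ ≤ R for all t (one may take R = ‖α‖₂). Then ‖h_T − h'_T‖₂ ≤ Σ_{t=1}^T K_M R γ^{T−t} ‖x_t − x'_t‖₂ ≤ (K_M R/(1 − γ)) · sup_{1 ≤ t ≤ T} ‖x_t − x'_t‖₂. In particular the map from input sequences to the final state is Lipschitz with a constant independent of the sequence length T. -/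
open Matrix

/-- The Euclidean (ℓ²) norm of a finitely-indexed real vector. -/
noncomputable def vecNorm {n : Type*} [Fintype n] (v : n → ℝ) : ℝ :=
  ‖(WithLp.equiv 2 (n → ℝ)).symm v‖

/-- The ℓ²→ℓ² operator norm (spectral norm) of a real matrix. -/
noncomputable def matNorm {m n : Type*} [Fintype m] [Fintype n] [DecidableEq n]
    (M : Matrix m n ℝ) : ℝ :=
  ‖LinearMap.toContinuousLinearMap (Matrix.toEuclideanLin M)‖

/-!
Split each step of the difference of the two trajectories as
`M(x_t) h - M(x'_t) h' = M(x_t) (h - h') + (M(x_t) - M(x'_t)) h'`: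
the old error is contracted by `γ`, and a new error of size at most `K_M ‖x_t - x'_t‖ R` enters.
An error that enters at time `t` has been contracted `T - t` times by time `T`, so the total is a
geometrically weighted sum of the input discrepancies, and the weights sum to at most `1 / (1 - γ)`
whatever `T` is.
-/

section Geometric

open Finset

theorem le_pow_mul_add_sum_of_forall_le_mul_add {S : Type*} [CommRing S] [PartialOrder S]
    [IsOrderedRing S] {γ : S} (hγ : 0 ≤ γ) {u b : ℕ → S} {T : ℕ}
    (hu : ∀ t < T, u (t + 1) ≤ γ * u t + b (t + 1)) :
    u T ≤ γ ^ T * u 0 + ∑ t ∈ Icc 1 T, γ ^ (T - t) * b t := by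
  -- `discrete_gronwall_prod_general` needs a recurrence at all times, so it is applied to the exact
  -- increments `u (t + 1) - γ * u t`, which are compared with `b` only before time `T`.
  have exact_increments := discrete_gronwall_prod_general (u := u) (c := fun _ ↦ γ)
    (b := fun t ↦ u (t + 1) - γ * u t) (n₀ := 0) (fun _ _ ↦ (add_sub_cancel _ _).ge)
    (fun _ _ ↦ hγ) T.zero_le
  simp only [prod_const, Nat.card_Ico, Nat.sub_zero] at exact_increments
  calc u T
    _ ≤ u 0 * γ ^ T + ∑ t ∈ Ico 0 T, (u (t + 1) - γ * u t) * γ ^ (T - (t + 1)) :=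
        exact_increments
    _ ≤ u 0 * γ ^ T + ∑ t ∈ Ico 0 T, b (t + 1) * γ ^ (T - (t + 1)) := by
        gcongr with t ht
        exact sub_le_iff_le_add'.2 (hu t (mem_Ico.1 ht).2)
    _ = γ ^ T * u 0 + ∑ t ∈ Icc 1 T, γ ^ (T - t) * b t := by
        rw [sum_Ico_add' (fun t ↦ b t * γ ^ (T - t)), zero_add, Ico_add_one_right_eq_Icc]
        simp only [mul_comm]

theorem sum_Icc_pow_sub_le {F : Type*} [Field F] [LinearOrder F] [IsStrictOrderedRing F] {γ : F}
    (hγ0 : 0 ≤ γ) (hγ1 : γ < 1) (n : ℕ) : ∑ t ∈ Icc 1 n, γ ^ (n - t) ≤ 1 / (1 - γ) := by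
  have reflect : ∑ t ∈ Icc 1 n, γ ^ (n - t) = ∑ i ∈ range n, γ ^ i := by
    rw [← Ico_add_one_right_eq_Icc, sum_Ico_reflect _ _ le_rfl]
    simp
  rw [reflect, le_div_iff₀ (sub_pos.2 hγ1), geom_sum_mul_neg]
  exact sub_le_self 1 (pow_nonneg hγ0 n)

theorem le_biSup_of_mem_finset {ι α : Type*} [ConditionallyCompleteLattice α] (f : ι → α)
    {s : Finset ι} {i : ι} (hi : i ∈ s) : f i ≤ ⨆ j ∈ s, f j := by
  have bddAbove : BddAbove (⋃ j, Set.range fun _ : j ∈ s ↦ f j) := by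
    refine (s.finite_toSet.image f).bddAbove.mono (Set.iUnion_subset ?_)
    rintro j _ ⟨hj, rfl⟩
    exact ⟨j, hj, rfl⟩
  exact le_ciSup₂ bddAbove i hi

theorem sum_mul_pow_sub_mul_le_mul_biSup {γ c : ℝ} (hγ0 : 0 ≤ γ) (hγ1 : γ < 1) {f : ℕ → ℝ}
    (hf : ∀ t, 0 ≤ f t) (hcf : ∀ t, 0 ≤ c * f t) (n : ℕ) :
    ∑ t ∈ Icc 1 n, c * γ ^ (n - t) * f t ≤ c / (1 - γ) * ⨆ t ∈ Icc 1 n, f t := by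
  rcases le_or_gt 0 c with hc | hc
  · have sup_nonneg : 0 ≤ ⨆ t ∈ Icc 1 n, f t :=
      Real.iSup_nonneg fun t ↦ Real.iSup_nonneg fun _ ↦ hf t
    calc ∑ t ∈ Icc 1 n, c * γ ^ (n - t) * f t
      _ ≤ ∑ t ∈ Icc 1 n, c * γ ^ (n - t) * ⨆ t ∈ Icc 1 n, f t := by
          gcongr with t ht
          exact le_biSup_of_mem_finset f ht
      _ = c * (∑ t ∈ Icc 1 n, γ ^ (n - t)) * ⨆ t ∈ Icc 1 n, f t := by
          rw [mul_sum, sum_mul]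
      _ ≤ c * (1 / (1 - γ)) * ⨆ t ∈ Icc 1 n, f t := by
          gcongr
          exact sum_Icc_pow_sub_le hγ0 hγ1 n
      _ = c / (1 - γ) * ⨆ t ∈ Icc 1 n, f t := by rw [mul_one_div]
  · have f_eq_zero (t : ℕ) : f t = 0 :=
      (nonpos_of_mul_nonneg_right (hcf t) hc).antisymm (hf t)
    simp [f_eq_zero]

end Geometric

section LinearRecurrence

variable {𝕜 E : Type*} [NontriviallyNormedField 𝕜] [SeminormedAddCommGroup E] [NormedSpace 𝕜 E]

theorem dist_apply_apply_le {F : Type*} [SeminormedAddCommGroup F] [NormedSpace 𝕜 F]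
    (A B : E →L[𝕜] F) (v w : E) : dist (A v) (B w) ≤ ‖A‖ * dist v w + ‖A - B‖ * ‖w‖ :=
  calc dist (A v) (B w)
    _ ≤ dist (A v) (A w) + dist (A w) (B w) := dist_triangle _ _ _
    _ = dist (A v) (A w) + ‖(A - B) w‖ := by rw [dist_eq_norm (A w), _root_.sub_apply]
    _ ≤ ‖A‖ * dist v w + ‖A - B‖ * ‖w‖ := add_le_add (A.dist_le_opNorm v w) ((A - B).le_opNorm w)

variable {U : Type*} [PseudoMetricSpace U] {A : U → E →L[𝕜] E} {γ K R : ℝ} {T : ℕ}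
  {x x' : ℕ → U} {h h' : ℕ → E}

theorem dist_le_of_linear_recurrence (hA : ∀ u, ‖A u‖ ≤ γ)
    (hAK : ∀ u v, ‖A u - A v‖ ≤ K * dist u v)
    (hrec : ∀ t < T, h (t + 1) = A (x (t + 1)) (h t))
    (hrec' : ∀ t < T, h' (t + 1) = A (x' (t + 1)) (h' t)) (hR : ∀ t < T, ‖h' t‖ ≤ R) :
    dist (h T) (h' T) ≤ γ ^ T * dist (h 0) (h' 0) +
      ∑ t ∈ Finset.Icc 1 T, γ ^ (T - t) * (K * dist (x t) (x' t) * R) := by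
  refine le_pow_mul_add_sum_of_forall_le_mul_add (u := fun t ↦ dist (h t) (h' t))
    ((norm_nonneg _).trans (hA (x 0))) fun t ht ↦ ?_
  have lipschitz_nonneg : 0 ≤ K * dist (x (t + 1)) (x' (t + 1)) :=
    (norm_nonneg _).trans (hAK _ _)
  calc dist (h (t + 1)) (h' (t + 1))
    _ = dist (A (x (t + 1)) (h t)) (A (x' (t + 1)) (h' t)) := by rw [hrec t ht, hrec' t ht]
    _ ≤ ‖A (x (t + 1))‖ * dist (h t) (h' t) + ‖A (x (t + 1)) - A (x' (t + 1))‖ * ‖h' t‖ :=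
        dist_apply_apply_le _ _ _ _
    _ ≤ γ * dist (h t) (h' t) + K * dist (x (t + 1)) (x' (t + 1)) * R := by
        gcongr
        exacts [hA _, hAK _ _, hR t ht]

theorem stmt12_general (hγ1 : γ < 1) (hA : ∀ u, ‖A u‖ ≤ γ)
    (hAK : ∀ u v, ‖A u - A v‖ ≤ K * dist u v) (h0 : h 0 = h' 0)
    (hrec : ∀ t < T, h (t + 1) = A (x (t + 1)) (h t))
    (hrec' : ∀ t < T, h' (t + 1) = A (x' (t + 1)) (h' t)) (hR : ∀ t ≤ T, ‖h' t‖ ≤ R) :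
    dist (h T) (h' T) ≤ ∑ t ∈ Finset.Icc 1 T, K * R * γ ^ (T - t) * dist (x t) (x' t) ∧
    ∑ t ∈ Finset.Icc 1 T, K * R * γ ^ (T - t) * dist (x t) (x' t) ≤
      K * R / (1 - γ) * ⨆ t ∈ Finset.Icc 1 T, dist (x t) (x' t) := by
  have hγ0 : 0 ≤ γ := (norm_nonneg _).trans (hA (x 0))
  have hR0 : 0 ≤ R := (norm_nonneg _).trans (hR 0 T.zero_le)
  have weight_nonneg (t : ℕ) : 0 ≤ K * R * dist (x t) (x' t) := by
    rw [mul_right_comm]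
    exact mul_nonneg ((norm_nonneg _).trans (hAK _ _)) hR0
  refine ⟨?_, sum_mul_pow_sub_mul_le_mul_biSup hγ0 hγ1 (fun _ ↦ dist_nonneg) weight_nonneg T⟩
  refine (dist_le_of_linear_recurrence hA hAK hrec hrec' fun t ht ↦ hR t ht.le).trans_eq ?_
  rw [h0, dist_self, mul_zero, zero_add]
  exact Finset.sum_congr rfl fun _ _ ↦ by ring

end LinearRecurrence

section Euclidean

variable {n : Type*} [Fintype n]

theorem vecNorm_sub_eq_dist (v w : n → ℝ) :
    vecNorm (v - w) = dist (WithLp.toLp 2 v) (WithLp.toLp 2 w) :=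
  (dist_eq_norm (WithLp.toLp 2 v) (WithLp.toLp 2 w)).symm

theorem matNorm_sub_eq_norm_toEuclideanCLM_sub [DecidableEq n] (A B : Matrix n n ℝ) :
    matNorm (A - B) = ‖toEuclideanCLM (𝕜 := ℝ) A - toEuclideanCLM (𝕜 := ℝ) B‖ := by
  rw [← map_sub]
  rfl

end Euclidean

/-- Lipschitz input stability. If the encoding `u ↦ M(u)` is contractive
(`‖M(u)‖₂ ≤ γ < 1`) and `K_M`-Lipschitz, the two trajectories `h_t = M(x_t) h_{t−1}` and
`h'_t = M(x'_t) h'_{t−1}` start from the common state `α`, and `‖h'_t‖₂ ≤ R` for all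
`t ≤ T`, then
`‖h_T − h'_T‖₂ ≤ Σ_{t=1}^T K_M R γ^{T−t} ‖x_t − x'_t‖₂
  ≤ (K_M R / (1−γ)) · sup_{1 ≤ t ≤ T} ‖x_t − x'_t‖₂`. -/
theorem stmt12 (din d : ℕ) (γ KM R : ℝ) (hγ1 : γ < 1)
    (M : (Fin din → ℝ) → Matrix (Fin d) (Fin d) ℝ)
    (hMc : ∀ u : Fin din → ℝ, matNorm (M u) ≤ γ)
    (hML : ∀ u u' : Fin din → ℝ, matNorm (M u - M u') ≤ KM * vecNorm (u - u'))
    (T : ℕ) (x x' : ℕ → Fin din → ℝ) (α : Fin d → ℝ)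
    (h h' : ℕ → Fin d → ℝ)
    (h0 : h 0 = α) (h0' : h' 0 = α)
    (hrec : ∀ t < T, h (t + 1) = M (x (t + 1)) *ᵥ h t)
    (hrec' : ∀ t < T, h' (t + 1) = M (x' (t + 1)) *ᵥ h' t)
    (hR : ∀ t ≤ T, vecNorm (h' t) ≤ R) :
    vecNorm (h T - h' T) ≤
      ∑ t ∈ Finset.Icc 1 T, KM * R * γ ^ (T - t) * vecNorm (x t - x' t) ∧
    ∑ t ∈ Finset.Icc 1 T, KM * R * γ ^ (T - t) * vecNorm (x t - x' t) ≤
      (KM * R / (1 - γ)) * ⨆ t ∈ Finset.Icc 1 T, vecNorm (x t - x' t) := by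
  simp only [vecNorm_sub_eq_dist, matNorm_sub_eq_norm_toEuclideanCLM_sub] at hML ⊢
  exact stmt12_general (U := EuclideanSpace ℝ (Fin din))
    (A := fun u ↦ toEuclideanCLM (𝕜 := ℝ) (M u.ofLp)) (h := fun t ↦ WithLp.toLp 2 (h t))
    (h' := fun t ↦ WithLp.toLp 2 (h' t)) hγ1 (fun u ↦ hMc u.ofLp)
    (fun u v ↦ hML u.ofLp v.ofLp) (congrArg _ (h0.trans h0'.symm))
    (fun t ht ↦ congrArg _ (hrec t ht)) (fun t ht ↦ congrArg _ (hrec' t ht)) hR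
end
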